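/- Let h ⊆ BD(G) ⊕ BD(G) be maximal monotone and selfadjoint, with Arens decomposition h = S ⊕ ({0} × U^⊥), U := closure of [BD(G)]h, and let R be a nonnegative selfadjoint square root of S (R ∘ R = S). Set E₀ := {u ∈ D(G) : π_{BD(G)}u ∈ D(R)}, L : E₀ → H, u ↦ Gu, K : E₀ → U, u ↦ Rπ_{BD(G)}u. Then {(u,w) ∈ D(G) × D(D) : (π_{BD(G)}u, Ḋπ_{BD(D)}w) ∈ h} = {(u,w) ∈ E₀ × H : K^⋄Ku − L^⋄w ∈ E}, where 'K^⋄Ku − L^⋄w ∈ E' means there exists e ∈ E with ⟨e,x⟩_E = ⟨Ku,Kx⟩_U − ⟨w,Lx⟩_H for all x ∈ E₀. -/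

import Mathlib

/-!
Green's formula `⟪Dw, u⟫ + ⟪w, Gu⟫ = ⟪Ḋπ_{BD(D)}w, π_{BD(G)}u⟫_{BD(G)}` turns the weak equation
`⟪e, x⟫ = q(πu, πx) - ⟪w, Gx⟫` into `Dw = e` (test on `D(G₀)`, where `π` vanishes) together with
the boundary equation `⟪Ḋπw, y⟫ = q(πu, y)` (test on `BD(G)`, where `π` is the identity). If `q`
is Hermitian and `⟪v, y⟫ = q(u, y)` for all `(u, v) ∈ h`, then the boundary equation says
`(πu, Ḋπw) ∈ h*`, and `h* = h`. Symmetry of the square root `R` makes `q(x, y) = ⟪Rx, Ry⟫` such a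
form.
-/

open scoped ComplexInnerProductSpace
open Filter Topology Classical

noncomputable section

variable {E H : Type*}
  [NormedAddCommGroup E] [InnerProductSpace ℂ E] [CompleteSpace E]
  [NormedAddCommGroup H] [InnerProductSpace ℂ H] [CompleteSpace H]

/-- The operator `G := (−D₀)*`. -/
def Gop (D₀ : H →ₗ.[ℂ] E) : E →ₗ.[ℂ] H := (-D₀).adjoint

/-- The operator `D := −(G₀)*`. -/
def Dop (G₀ : E →ₗ.[ℂ] H) : H →ₗ.[ℂ] E := -(G₀.adjoint)

/-- Pointwise application of `G`, defined to be `0` off the domain. -/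
def Gap (D₀ : H →ₗ.[ℂ] E) (u : E) : H :=
  if h : u ∈ (Gop D₀).domain then Gop D₀ ⟨u, h⟩ else 0

/-- Pointwise application of `D`, defined to be `0` off the domain. -/
def Dap (G₀ : E →ₗ.[ℂ] H) (w : H) : E :=
  if h : w ∈ (Dop G₀).domain then Dop G₀ ⟨w, h⟩ else 0

/-- The graph inner product of `D_G`: `⟪x,y⟫_E + ⟪Gx,Gy⟫_H`. -/
def innG (D₀ : H →ₗ.[ℂ] E) (x y : E) : ℂ := ⟪x, y⟫ + ⟪Gap D₀ x, Gap D₀ y⟫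

/-- The graph inner product of `D_D`: `⟪x,y⟫_H + ⟪Dx,Dy⟫_E`. -/
def innD (G₀ : E →ₗ.[ℂ] H) (x y : H) : ℂ := ⟪x, y⟫ + ⟪Dap G₀ x, Dap G₀ y⟫

/-- The boundary data space `BD(G)`, the orthogonal complement of `D(G₀)` in `D_G`. -/
def BDG (G₀ : E →ₗ.[ℂ] H) (D₀ : H →ₗ.[ℂ] E) : Set E :=
  {u | u ∈ (Gop D₀).domain ∧ ∀ v ∈ G₀.domain, innG D₀ u v = 0}

/-- The boundary data space `BD(D)`, the orthogonal complement of `D(D₀)` in `D_D`. -/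
def BDD (G₀ : E →ₗ.[ℂ] H) (D₀ : H →ₗ.[ℂ] E) : Set H :=
  {w | w ∈ (Dop G₀).domain ∧ ∀ v ∈ D₀.domain, innD G₀ w v = 0}

/-- Monotonicity of a relation on `BD(G)` with respect to the graph inner product. -/
def IsMonotoneBDG (D₀ : H →ₗ.[ℂ] E) (h : Set (E × E)) : Prop :=
  ∀ p ∈ h, ∀ q ∈ h, 0 ≤ (innG D₀ (p.1 - q.1) (p.2 - q.2)).re

/-- Maximal monotonicity of a relation on the Hilbert space `BD(G)` (with the graph inner
product): `h` is monotone and has no proper monotone extension within `BD(G) ⊕ BD(G)`. -/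
def IsMaximalMonotoneBDG (G₀ : E →ₗ.[ℂ] H) (D₀ : H →ₗ.[ℂ] E) (h : Set (E × E)) : Prop :=
  h ⊆ (BDG G₀ D₀) ×ˢ (BDG G₀ D₀) ∧ IsMonotoneBDG D₀ h ∧
    ∀ b : Set (E × E), b ⊆ (BDG G₀ D₀) ×ˢ (BDG G₀ D₀) → IsMonotoneBDG D₀ b → h ⊆ b → b = h

/-- The adjoint relation of `h ⊆ BD(G) ⊕ BD(G)`, namely `h* = {(v,−u) : (u,v) ∈ h}^⊥` with
the orthogonal complement taken in `BD(G) ⊕ BD(G)`: a pair `(x,y) ∈ BD(G) ⊕ BD(G)` belongs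
to `h*` iff `⟪v,x⟫_{BD(G)} = ⟪u,y⟫_{BD(G)}` for all `(u,v) ∈ h`. -/
def adjBDG (G₀ : E →ₗ.[ℂ] H) (D₀ : H →ₗ.[ℂ] E) (h : Set (E × E)) : Set (E × E) :=
  {q | q.1 ∈ BDG G₀ D₀ ∧ q.2 ∈ BDG G₀ D₀ ∧
    ∀ p ∈ h, innG D₀ p.2 q.1 = innG D₀ p.1 q.2}

/-- The pre-set `[BD(G)]h = {u : ∃ v, (u,v) ∈ h}` of a relation `h` on `BD(G)`. -/
def preSetE (h : Set (E × E)) : Set E := {u | ∃ v, (u, v) ∈ h}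

/-- The closure of a set `s ⊆ D(G)` inside the Hilbert space `D_G` (with the graph norm),
in sequential form. -/
def clG (D₀ : H →ₗ.[ℂ] E) (s : Set E) : Set E :=
  {u | u ∈ (Gop D₀).domain ∧ ∃ f : ℕ → E, (∀ n, f n ∈ s) ∧
    Tendsto f atTop (nhds u) ∧ Tendsto (fun n => Gap D₀ (f n)) atTop (nhds (Gap D₀ u))}

section AdjointGraph

variable {X Y : Type*}
  [NormedAddCommGroup X] [InnerProductSpace ℂ X] [CompleteSpace X]
  [NormedAddCommGroup Y] [InnerProductSpace ℂ Y]

theorem mem_graph_adjoint_iff {T : X →ₗ.[ℂ] Y} (hT : Dense (T.domain : Set X)) {y : Y} {x : X} :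
    (y, x) ∈ T.adjoint.graph ↔ ∀ v : T.domain, (⟪x, v⟫ : ℂ) = ⟪y, T v⟫ := by
  rw [LinearPMap.mem_graph_iff]
  constructor
  · rintro ⟨y', rfl, rfl⟩ v
    exact LinearPMap.adjoint_isFormalAdjoint hT y' v
  · intro hx
    have hy : y ∈ T.adjoint.domain := LinearPMap.mem_adjoint_domain_of_exists y ⟨x, hx⟩
    exact ⟨⟨y, hy⟩, rfl, LinearPMap.adjoint_apply_eq hT ⟨y, hy⟩ hx⟩

theorem Gap_coe (D₀ : X →ₗ.[ℂ] Y) (u : (Gop D₀).domain) : Gap D₀ u = Gop D₀ u :=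
  dif_pos u.2

theorem Dap_coe (G₀ : X →ₗ.[ℂ] Y) (w : (Dop G₀).domain) : Dap G₀ w = Dop G₀ w :=
  dif_pos w.2

theorem Gap_sub {D₀ : X →ₗ.[ℂ] Y} {u v : Y} (hu : u ∈ (Gop D₀).domain)
    (hv : v ∈ (Gop D₀).domain) : Gap D₀ (u - v) = Gap D₀ u - Gap D₀ v := by
  lift u to (Gop D₀).domain using hu
  lift v to (Gop D₀).domain using hv
  rw [← AddSubgroupClass.coe_sub, Gap_coe, Gap_coe, Gap_coe, LinearPMap.map_sub]

theorem Dap_sub {G₀ : X →ₗ.[ℂ] Y} {w z : Y} (hw : w ∈ (Dop G₀).domain)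
    (hz : z ∈ (Dop G₀).domain) : Dap G₀ (w - z) = Dap G₀ w - Dap G₀ z := by
  lift w to (Dop G₀).domain using hw
  lift z to (Dop G₀).domain using hz
  rw [← AddSubgroupClass.coe_sub, Dap_coe, Dap_coe, Dap_coe, LinearPMap.map_sub]

theorem mem_domain_Gop_and_Gap_eq_iff {D₀ : X →ₗ.[ℂ] Y} (hD₀ : Dense (D₀.domain : Set X))
    {u : Y} {g : X} :
    (u ∈ (Gop D₀).domain ∧ Gap D₀ u = g) ↔ ∀ v : D₀.domain, (⟪g, v⟫ : ℂ) = -⟪u, D₀ v⟫ := by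
  have hgraph : (u ∈ (Gop D₀).domain ∧ Gap D₀ u = g) ↔ (u, g) ∈ (-D₀).adjoint.graph := by
    rw [LinearPMap.mem_graph_iff]
    constructor
    · rintro ⟨hu, rfl⟩
      exact ⟨⟨u, hu⟩, rfl, (Gap_coe D₀ ⟨u, hu⟩).symm⟩
    · rintro ⟨u, rfl, rfl⟩
      exact ⟨u.2, Gap_coe D₀ u⟩
  simp only [hgraph, mem_graph_adjoint_iff (T := -D₀) hD₀, LinearPMap.neg_apply, inner_neg_right]
  rfl

theorem mem_domain_Dop_and_Dap_eq_iff {G₀ : X →ₗ.[ℂ] Y} (hG₀ : Dense (G₀.domain : Set X))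
    {w : Y} {g : X} :
    (w ∈ (Dop G₀).domain ∧ Dap G₀ w = g) ↔ ∀ v : G₀.domain, (⟪g, v⟫ : ℂ) = -⟪w, G₀ v⟫ := by
  have hgraph : (w ∈ (Dop G₀).domain ∧ Dap G₀ w = g) ↔ (w, -g) ∈ G₀.adjoint.graph := by
    rw [LinearPMap.mem_graph_iff]
    constructor
    · rintro ⟨hw, rfl⟩
      exact ⟨⟨w, hw⟩, rfl, neg_eq_iff_eq_neg.mp (Dap_coe G₀ ⟨w, hw⟩).symm⟩
    · rintro ⟨w, rfl, hg⟩
      exact ⟨w.2, (Dap_coe G₀ w).trans (neg_eq_iff_eq_neg.mpr hg)⟩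
  simp only [hgraph, mem_graph_adjoint_iff hG₀, inner_neg_left, neg_eq_iff_eq_neg]

theorem Gap_coe_of_le {G₀ : Y →ₗ.[ℂ] X} {D₀ : X →ₗ.[ℂ] Y} (hsub : G₀ ≤ Gop D₀)
    (v : G₀.domain) : Gap D₀ v = G₀ v := by
  rw [Gap, dif_pos (hsub.1 v.2)]
  exact (hsub.2 rfl).symm

theorem Dap_coe_of_le {G₀ : X →ₗ.[ℂ] Y} {D₀ : Y →ₗ.[ℂ] X} (hsub : D₀ ≤ Dop G₀)
    (v : D₀.domain) : Dap G₀ v = D₀ v := by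
  rw [Dap, dif_pos (hsub.1 v.2)]
  exact (hsub.2 rfl).symm

end AdjointGraph

section GraphInner

omit [CompleteSpace E]

variable {D₀ : H →ₗ.[ℂ] E}

theorem innG_conj_symm (x y : E) : starRingEnd ℂ (innG D₀ x y) = innG D₀ y x := by
  rw [innG, innG, map_add, inner_conj_symm, inner_conj_symm]

theorem innG_sub_left {x y : E} (hx : x ∈ (Gop D₀).domain) (hy : y ∈ (Gop D₀).domain) (z : E) :
    innG D₀ (x - y) z = innG D₀ x z - innG D₀ y z := by
  rw [innG, innG, innG, Gap_sub hx hy, inner_sub_left, inner_sub_left]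
  ring

theorem innG_zero_left (x : E) : innG D₀ 0 x = 0 := by
  simpa only [sub_self] using innG_sub_left (D₀ := D₀) (zero_mem _) (zero_mem _) x

theorem innG_zero_right (x : E) : innG D₀ x 0 = 0 := by
  rw [← innG_conj_symm, innG_zero_left, map_zero]

theorem eq_zero_of_innG_self_eq_zero {x : E} (hx : innG D₀ x x = 0) : x = 0 := by
  have hre : RCLike.re (⟪x, x⟫ : ℂ) + RCLike.re (⟪Gap D₀ x, Gap D₀ x⟫ : ℂ) = 0 := by
    rw [← map_add, ← innG, hx, map_zero]
  have hx0 : RCLike.re (⟪x, x⟫ : ℂ) ≤ 0 := by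
    linarith [inner_self_nonneg (𝕜 := ℂ) (x := Gap D₀ x)]
  exact re_inner_self_nonpos.mp hx0

end GraphInner

section BoundaryDataSpace

omit [CompleteSpace E]

variable {G₀ : E →ₗ.[ℂ] H} {D₀ : H →ₗ.[ℂ] E}

theorem zero_mem_BDG : (0 : E) ∈ BDG G₀ D₀ :=
  ⟨zero_mem _, fun v _ => innG_zero_left v⟩

theorem eq_of_mem_BDG_of_sub_mem_domain {x y : E} (hx : x ∈ BDG G₀ D₀) (hy : y ∈ BDG G₀ D₀)
    (hxy : x - y ∈ G₀.domain) : x = y := by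
  apply sub_eq_zero.mp
  apply eq_zero_of_innG_self_eq_zero (D₀ := D₀)
  rw [innG_sub_left hx.1 hy.1, hx.2 _ hxy, hy.2 _ hxy, sub_zero]

variable {PG : E → E}
  (hPG : ∀ u ∈ (Gop D₀).domain, PG u ∈ BDG G₀ D₀ ∧ u - PG u ∈ G₀.domain)

include hPG

theorem projBDG_eq_self {u : E} (hu : u ∈ BDG G₀ D₀) : PG u = u :=
  (eq_of_mem_BDG_of_sub_mem_domain hu (hPG u hu.1).1 (hPG u hu.1).2).symm

theorem projBDG_eq_zero (hsub : G₀ ≤ Gop D₀) {u : E} (hu : u ∈ G₀.domain) : PG u = 0 := by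
  have hPu := hPG u (hsub.1 hu)
  apply eq_of_mem_BDG_of_sub_mem_domain hPu.1 zero_mem_BDG
  simpa only [sub_sub_cancel, sub_zero] using G₀.domain.sub_mem hu hPu.2

end BoundaryDataSpace

section Green

variable {G₀ : E →ₗ.[ℂ] H} {D₀ : H →ₗ.[ℂ] E}

theorem le_Dop_of_le_Gop (hG₀ : Dense (G₀.domain : Set E)) (hD₀ : Dense (D₀.domain : Set H))
    (hsub : G₀ ≤ Gop D₀) : D₀ ≤ Dop G₀ := by
  have hgraph (v : D₀.domain) : (v : H) ∈ (Dop G₀).domain ∧ Dap G₀ v = D₀ v := by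
    refine (mem_domain_Dop_and_Dap_eq_iff hG₀).mpr fun u => ?_
    have hu := (mem_domain_Gop_and_Gap_eq_iff hD₀).mp ⟨hsub.1 u.2, Gap_coe_of_le hsub u⟩ v
    rw [← inner_conj_symm, ← inner_conj_symm (v : H), hu, map_neg, neg_neg]
  refine ⟨fun v hv => (hgraph ⟨v, hv⟩).1, ?_⟩
  rintro v ⟨_, hv⟩ rfl
  exact (hgraph v).2.symm.trans (dif_pos hv)

theorem Dap_mem_BDG_and_Gap_Dap_eq (hG₀ : Dense (G₀.domain : Set E))
    (hD₀ : Dense (D₀.domain : Set H)) (hsub : G₀ ≤ Gop D₀) {w : H} (hw : w ∈ BDD G₀ D₀) :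
    Dap G₀ w ∈ BDG G₀ D₀ ∧ Gap D₀ (Dap G₀ w) = w := by
  obtain ⟨hDw, hGDw⟩ : Dap G₀ w ∈ (Gop D₀).domain ∧ Gap D₀ (Dap G₀ w) = w := by
    refine (mem_domain_Gop_and_Gap_eq_iff hD₀).mpr fun v => ?_
    rw [← Dap_coe_of_le (le_Dop_of_le_Gop hG₀ hD₀ hsub) v]
    exact eq_neg_of_add_eq_zero_left (hw.2 v v.2)
  refine ⟨⟨hDw, fun v hv => ?_⟩, hGDw⟩
  rw [innG, hGDw, Gap_coe_of_le hsub ⟨v, hv⟩,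
    (mem_domain_Dop_and_Dap_eq_iff hG₀).mp ⟨hw.1, rfl⟩ ⟨v, hv⟩, neg_add_cancel]

/-- The boundary form `⟪Dw, u⟫ + ⟪w, Gu⟫`, the defect in the integration by parts formula for `G`
and `D`. -/
def boundaryForm (G₀ : E →ₗ.[ℂ] H) (D₀ : H →ₗ.[ℂ] E) (w : H) (u : E) : ℂ :=
  ⟪Dap G₀ w, u⟫ + ⟪w, Gap D₀ u⟫

theorem boundaryForm_sub_left {w z : H} (hw : w ∈ (Dop G₀).domain) (hz : z ∈ (Dop G₀).domain)
    (u : E) : boundaryForm G₀ D₀ (w - z) u = boundaryForm G₀ D₀ w u - boundaryForm G₀ D₀ z u := by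
  rw [boundaryForm, boundaryForm, boundaryForm, Dap_sub hw hz, inner_sub_left, inner_sub_left]
  ring

theorem boundaryForm_sub_right (w : H) {u v : E} (hu : u ∈ (Gop D₀).domain)
    (hv : v ∈ (Gop D₀).domain) :
    boundaryForm G₀ D₀ w (u - v) = boundaryForm G₀ D₀ w u - boundaryForm G₀ D₀ w v := by
  rw [boundaryForm, boundaryForm, boundaryForm, Gap_sub hu hv, inner_sub_right, inner_sub_right]
  ring

theorem boundaryForm_eq_zero_of_mem_left (hD₀ : Dense (D₀.domain : Set H)) (hsub : D₀ ≤ Dop G₀)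
    {w : H} (hw : w ∈ D₀.domain) {u : E} (hu : u ∈ (Gop D₀).domain) :
    boundaryForm G₀ D₀ w u = 0 := by
  have hGu := (mem_domain_Gop_and_Gap_eq_iff hD₀).mp ⟨hu, rfl⟩ ⟨w, hw⟩
  rw [boundaryForm, Dap_coe_of_le hsub ⟨w, hw⟩, ← inner_conj_symm w, hGu, map_neg,
    inner_conj_symm, add_neg_cancel]

theorem boundaryForm_eq_zero_of_mem_right (hG₀ : Dense (G₀.domain : Set E)) (hsub : G₀ ≤ Gop D₀)
    {w : H} (hw : w ∈ (Dop G₀).domain) {u : E} (hu : u ∈ G₀.domain) :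
    boundaryForm G₀ D₀ w u = 0 := by
  rw [boundaryForm, Gap_coe_of_le hsub ⟨u, hu⟩,
    (mem_domain_Dop_and_Dap_eq_iff hG₀).mp ⟨hw, rfl⟩ ⟨u, hu⟩, neg_add_cancel]

theorem boundaryForm_eq_innG (hG₀ : Dense (G₀.domain : Set E)) (hD₀ : Dense (D₀.domain : Set H))
    (hsub : G₀ ≤ Gop D₀) {w wb : H} {u ub : E} (hw : w ∈ (Dop G₀).domain)
    (hwb : wb ∈ BDD G₀ D₀) (hwwb : w - wb ∈ D₀.domain) (hu : u ∈ (Gop D₀).domain)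
    (hub : ub ∈ BDG G₀ D₀) (huub : u - ub ∈ G₀.domain) :
    boundaryForm G₀ D₀ w u = innG D₀ (Dap G₀ wb) ub := by
  have hsub' := le_Dop_of_le_Gop hG₀ hD₀ hsub
  calc boundaryForm G₀ D₀ w u
      = boundaryForm G₀ D₀ wb u := by
        rw [← sub_eq_zero, ← boundaryForm_sub_left hw hwb.1]
        exact boundaryForm_eq_zero_of_mem_left hD₀ hsub' hwwb hu
    _ = boundaryForm G₀ D₀ wb ub := by
        rw [← sub_eq_zero, ← boundaryForm_sub_right wb hu hub.1]
        exact boundaryForm_eq_zero_of_mem_right hG₀ hsub hwb.1 huub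
    _ = innG D₀ (Dap G₀ wb) ub := by
        rw [boundaryForm, innG, (Dap_mem_BDG_and_Gap_Dap_eq hG₀ hD₀ hsub hwb).2]

theorem exists_inner_eq_sub_iff (hG₀ : Dense (G₀.domain : Set E))
    (hD₀ : Dense (D₀.domain : Set H)) (hsub : G₀ ≤ Gop D₀) {PG : E → E} {PD : H → H}
    (hPG : ∀ u ∈ (Gop D₀).domain, PG u ∈ BDG G₀ D₀ ∧ u - PG u ∈ G₀.domain)
    (hPD : ∀ w ∈ (Dop G₀).domain, PD w ∈ BDD G₀ D₀ ∧ w - PD w ∈ D₀.domain)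
    {V : Set E} (hV : 0 ∈ V) {f : E → ℂ} (hf : f 0 = 0) {w : H} :
    (∃ e : E, ∀ x ∈ (Gop D₀).domain, PG x ∈ V → (⟪e, x⟫ : ℂ) = f (PG x) - ⟪w, Gap D₀ x⟫) ↔
      w ∈ (Dop G₀).domain ∧ ∀ y ∈ BDG G₀ D₀, y ∈ V → innG D₀ (Dap G₀ (PD w)) y = f y := by
  have green (hw : w ∈ (Dop G₀).domain) (x : E) (hx : x ∈ (Gop D₀).domain) :
      boundaryForm G₀ D₀ w x = innG D₀ (Dap G₀ (PD w)) (PG x) :=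
    boundaryForm_eq_innG hG₀ hD₀ hsub hw (hPD w hw).1 (hPD w hw).2 hx (hPG x hx).1 (hPG x hx).2
  constructor
  · rintro ⟨e, he⟩
    obtain ⟨hw, rfl⟩ : w ∈ (Dop G₀).domain ∧ Dap G₀ w = e := by
      refine (mem_domain_Dop_and_Dap_eq_iff hG₀).mpr fun v => ?_
      have hPv : PG v = 0 := projBDG_eq_zero hPG hsub v.2
      rw [he v (hsub.1 v.2) (hPv ▸ hV), hPv, hf, Gap_coe_of_le hsub, zero_sub]
    refine ⟨hw, fun y hy hyV => ?_⟩
    have hPy : PG y = y := projBDG_eq_self hPG hy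
    calc innG D₀ (Dap G₀ (PD w)) y
        = boundaryForm G₀ D₀ w y := by rw [green hw y hy.1, hPy]
      _ = f y := by rw [boundaryForm, he y hy.1 (hPy.symm ▸ hyV), hPy, sub_add_cancel]
  · rintro ⟨hw, hboundary⟩
    refine ⟨Dap G₀ w, fun x hx hxV => ?_⟩
    rw [← hboundary (PG x) (hPG x hx).1 hxV, ← green hw x hx, boundaryForm, add_sub_cancel_right]

end Green

section FormRepresentation

omit [CompleteSpace E]

variable {G₀ : E →ₗ.[ℂ] H} {D₀ : H →ₗ.[ℂ] E} {h : Set (E × E)} {V : Set E}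

/-- The relation `h` on `BD(G)` is represented by the Hermitian form `q` with form domain `V`, as in
Kato's representation theorem: `⟪v, y⟫_{BD(G)} = q u y` for `(u, v) ∈ h` and `y ∈ V`. Only the
values of `q` on `V` matter. -/
structure IsRepresentedByForm (D₀ : H →ₗ.[ℂ] E) (h : Set (E × E)) (V : Set E) (q : E → E → ℂ) :
    Prop where
  conj_symm : ∀ x ∈ V, ∀ y ∈ V, starRingEnd ℂ (q x y) = q y x
  preSetE_subset : preSetE h ⊆ V
  innG_eq : ∀ p ∈ h, ∀ y ∈ V, innG D₀ p.2 y = q p.1 y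

theorem zero_mem_of_eq_adjBDG (hself : h = adjBDG G₀ D₀ h) : ((0, 0) : E × E) ∈ h := by
  rw [hself]
  exact ⟨zero_mem_BDG, zero_mem_BDG, fun p _ => by rw [innG_zero_right, innG_zero_right]⟩

namespace IsRepresentedByForm

variable {q : E → E → ℂ} (hq : IsRepresentedByForm D₀ h V q)

include hq

theorem zero_mem (hself : h = adjBDG G₀ D₀ h) : (0 : E) ∈ V :=
  hq.preSetE_subset ⟨0, zero_mem_of_eq_adjBDG hself⟩

theorem apply_zero_right (hself : h = adjBDG G₀ D₀ h) {u : E} (hu : u ∈ V) : q u 0 = 0 := by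
  rw [← hq.conj_symm 0 (hq.zero_mem hself) u hu,
    ← hq.innG_eq (0, 0) (zero_mem_of_eq_adjBDG hself) u hu, innG_zero_left, map_zero]

theorem mem_iff (hself : h = adjBDG G₀ D₀ h) {u z : E} (hu : u ∈ BDG G₀ D₀)
    (hz : z ∈ BDG G₀ D₀) :
    (u, z) ∈ h ↔ u ∈ V ∧ ∀ y ∈ BDG G₀ D₀, y ∈ V → innG D₀ z y = q u y := by
  constructor
  · intro huz
    exact ⟨hq.preSetE_subset ⟨z, huz⟩, fun y _ hy => hq.innG_eq (u, z) huz y hy⟩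
  · rintro ⟨huV, hzq⟩
    rw [hself]
    refine ⟨hu, hz, ?_⟩
    rintro ⟨a, b⟩ hab
    have ha : a ∈ BDG G₀ D₀ := (hself ▸ hab : (a, b) ∈ adjBDG G₀ D₀ h).1
    have haV : a ∈ V := hq.preSetE_subset ⟨b, hab⟩
    calc innG D₀ b u
        = q a u := hq.innG_eq (a, b) hab u huV
      _ = starRingEnd ℂ (innG D₀ z a) := by rw [hzq a ha haV, hq.conj_symm u huV a haV]
      _ = innG D₀ a z := innG_conj_symm z a

end IsRepresentedByForm

theorem isRepresentedByForm_of_sqrt {S R : E → E}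
    (hSmem : ∀ u ∈ preSetE h, S u ∈ (Gop D₀).domain)
    (hArens : ∀ p ∈ h, ∃ n ∈ (Gop D₀).domain, (∀ y ∈ V, innG D₀ y n = 0) ∧ p.2 = S p.1 + n)
    (hRsymm : ∀ x ∈ V, ∀ y ∈ V, innG D₀ (R x) y = innG D₀ x (R y))
    (hRR : ∀ u ∈ preSetE h, u ∈ V ∧ R u ∈ V ∧ R (R u) = S u) :
    IsRepresentedByForm D₀ h V fun x y => innG D₀ (R x) (R y) where
  conj_symm x _ y _ := innG_conj_symm (R x) (R y)
  preSetE_subset u hu := (hRR u hu).1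
  innG_eq := by
    rintro ⟨u, v⟩ huv y hy
    have hu : u ∈ preSetE h := ⟨v, huv⟩
    obtain ⟨n, hn, hnV, rfl⟩ : ∃ n ∈ (Gop D₀).domain, (∀ y ∈ V, innG D₀ y n = 0) ∧ v = S u + n :=
      hArens (u, v) huv
    have hSu : S u ∈ (Gop D₀).domain := hSmem u hu
    calc innG D₀ (S u + n) y
        = innG D₀ (S u) y := by
          rw [← sub_eq_zero, ← innG_sub_left (add_mem hSu hn) hSu, add_sub_cancel_left,
            ← innG_conj_symm, hnV y hy, map_zero]
      _ = innG D₀ (R (R u)) y := by rw [(hRR u hu).2.2]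
      _ = innG D₀ (R u) (R y) := hRsymm (R u) (hRR u hu).2.1 y hy

end FormRepresentation

theorem domA_eq_of_sqrt_general {G₀ : E →ₗ.[ℂ] H} {D₀ : H →ₗ.[ℂ] E}
    (hG₀dense : Dense (G₀.domain : Set E)) (hD₀dense : Dense (D₀.domain : Set H))
    (hsub : G₀ ≤ Gop D₀) {PG : E → E} {PD : H → H}
    (hPG : ∀ u ∈ (Gop D₀).domain, PG u ∈ BDG G₀ D₀ ∧ u - PG u ∈ G₀.domain)
    (hPD : ∀ w ∈ (Dop G₀).domain, PD w ∈ BDD G₀ D₀ ∧ w - PD w ∈ D₀.domain)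
    {h : Set (E × E)} (hself : h = adjBDG G₀ D₀ h)
    {V : Set E} {q : E → E → ℂ} (hq : IsRepresentedByForm D₀ h V q) :
    {p : E × H | p.1 ∈ (Gop D₀).domain ∧ p.2 ∈ (Dop G₀).domain ∧
        (PG p.1, Dap G₀ (PD p.2)) ∈ h} =
      {p : E × H | (p.1 ∈ (Gop D₀).domain ∧ PG p.1 ∈ V) ∧
        ∃ e : E, ∀ x ∈ (Gop D₀).domain, PG x ∈ V →
          (⟪e, x⟫ : ℂ) = q (PG p.1) (PG x) - ⟪p.2, Gap D₀ x⟫} := by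
  ext ⟨u, w⟩
  have hmem (hu : u ∈ (Gop D₀).domain) (hw : w ∈ (Dop G₀).domain) :=
    hq.mem_iff hself (hPG u hu).1 (Dap_mem_BDG_and_Gap_Dap_eq hG₀dense hD₀dense hsub (hPD w hw).1).1
  have hweak (hu : PG u ∈ V) :=
    exists_inner_eq_sub_iff hG₀dense hD₀dense hsub hPG hPD (hq.zero_mem hself)
      (hq.apply_zero_right hself hu) (w := w)
  constructor
  · rintro ⟨hu, hw, huw⟩
    obtain ⟨huV, hboundary⟩ := (hmem hu hw).mp huw
    exact ⟨⟨hu, huV⟩, (hweak huV).mpr ⟨hw, hboundary⟩⟩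
  · rintro ⟨⟨hu, huV⟩, he⟩
    obtain ⟨hw, hboundary⟩ := (hweak huV).mp he
    exact ⟨hu, hw, (hmem hu hw).mpr ⟨huV, hboundary⟩⟩

/-- [Trostorff 2015, Lemma 3.9]: with `E₀ := {u ∈ D(G) : π_{BD(G)}u ∈ D(R)}`, `L = G` on
`E₀` and `K = Rπ_{BD(G)}` built from the square root `R = √S` of the Arens decomposition of
the maximal monotone selfadjoint relation `h`, one has
`{(u,w) ∈ D(G) × D(D) : (π_{BD(G)}u, Ḋπ_{BD(D)}w) ∈ h}
  = {(u,w) ∈ E₀ × H : K^⋄Ku − L^⋄w ∈ E}`,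
where `K^⋄Ku − L^⋄w ∈ E` means that there is an `e ∈ E` with
`⟪e,x⟫_E = ⟪Ku,Kx⟫_U − ⟪w,Lx⟫_H` for all `x ∈ E₀` (the inner product of `U ⊆ BD(G)` being
the graph inner product). -/
theorem domA_eq_of_sqrt (G₀ : E →ₗ.[ℂ] H) (D₀ : H →ₗ.[ℂ] E)
    (hG₀dense : Dense (G₀.domain : Set E)) (hD₀dense : Dense (D₀.domain : Set H))
    (hG₀closed : G₀.IsClosed) (hD₀closed : D₀.IsClosed)
    (hsub : G₀ ≤ Gop D₀)
    -- the orthogonal projections onto the boundary data spaces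
    (PG : E → E) (PD : H → H)
    (hPG : ∀ u ∈ (Gop D₀).domain, PG u ∈ BDG G₀ D₀ ∧ u - PG u ∈ G₀.domain)
    (hPD : ∀ w ∈ (Dop G₀).domain, PD w ∈ BDD G₀ D₀ ∧ w - PD w ∈ D₀.domain)
    -- `h` is maximal monotone and selfadjoint
    (h : Set (E × E))
    (hmax : IsMaximalMonotoneBDG G₀ D₀ h)
    (hself : h = adjBDG G₀ D₀ h)
    -- the Arens decomposition `h = S ⊕ ({0} × U^⊥)` with `U = clG D₀ (preSetE h)`
    (S : E → E)
    (hSmem : ∀ u ∈ preSetE h, S u ∈ clG D₀ (preSetE h))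
    (hArens : h = {q : E × E | q.1 ∈ preSetE h ∧ ∃ n ∈ BDG G₀ D₀,
      (∀ y ∈ clG D₀ (preSetE h), innG D₀ y n = 0) ∧ q.2 = S q.1 + n})
    -- `R = √S`: a nonnegative selfadjoint operator on `U` with domain `DR` and `R ∘ R = S`
    (DR : Set E) (R : E → E)
    (hDR : DR ⊆ clG D₀ (preSetE h))
    (hRmem : ∀ u ∈ DR, R u ∈ clG D₀ (preSetE h))
    (hRnonneg : ∀ u ∈ DR, 0 ≤ (innG D₀ u (R u)).re)
    (hRself : {p : E × E | p.1 ∈ DR ∧ p.2 = R p.1} =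
      {p : E × E | p.1 ∈ clG D₀ (preSetE h) ∧ p.2 ∈ clG D₀ (preSetE h) ∧
        ∀ u ∈ DR, innG D₀ (R u) p.1 = innG D₀ u p.2})
    (hRR : (∀ u : E, (u ∈ DR ∧ R u ∈ DR) ↔ u ∈ preSetE h) ∧
      ∀ u ∈ preSetE h, R (R u) = S u) :
    {p : E × H | p.1 ∈ (Gop D₀).domain ∧ p.2 ∈ (Dop G₀).domain ∧
        (PG p.1, Dap G₀ (PD p.2)) ∈ h} =
      {p : E × H | (p.1 ∈ (Gop D₀).domain ∧ PG p.1 ∈ DR) ∧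
        ∃ e : E, ∀ x ∈ (Gop D₀).domain, PG x ∈ DR →
          (⟪e, x⟫ : ℂ) = innG D₀ (R (PG p.1)) (R (PG x)) - ⟪p.2, Gap D₀ x⟫} := by
  have hArensDR (p : E × E) (hp : p ∈ h) : ∃ n ∈ (Gop D₀).domain,
      (∀ y ∈ DR, innG D₀ y n = 0) ∧ p.2 = S p.1 + n := by
    obtain ⟨-, n, hn, hnU, hpn⟩ := hArens.subset hp
    exact ⟨n, hn.1, fun y hy => hnU y (hDR hy), hpn⟩
  have hRsymm (x : E) (hx : x ∈ DR) (y : E) (hy : y ∈ DR) : innG D₀ (R x) y = innG D₀ x (R y) :=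
    (hRself.subset (⟨hy, rfl⟩ : (y, R y) ∈ {p : E × E | p.1 ∈ DR ∧ p.2 = R p.1})).2.2 x hx
  have hsqrt (u : E) (hu : u ∈ preSetE h) : u ∈ DR ∧ R u ∈ DR ∧ R (R u) = S u :=
    ⟨((hRR.1 u).mpr hu).1, ((hRR.1 u).mpr hu).2, hRR.2 u hu⟩
  exact domA_eq_of_sqrt_general hG₀dense hD₀dense hsub hPG hPD hself
    (isRepresentedByForm_of_sqrt (fun u hu => (hSmem u hu).1) hArensDR hRsymm hsqrt)
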